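/- Let H : [0,1]×ℝ² → ℝ be smooth with compact support, let {φ^t} be the flow of the time-dependent Hamiltonian vector field X_{H_t}, and let φ = φ¹ be the time-1 map. Then the Calabi invariant of φ is given by CAL(φ) = 2 ∫₀¹ ∫_{ℝ²} H(t,z) dx dy dt. -/

import Mathlib

open MeasureTheory

noncomputable section

/-- The standard area form `ω₀ = dx ∧ dy` on `ℝ²`, as a bilinear pairing. -/
def omega0 (u v : ℝ × ℝ) : ℝ := u.1 * v.2 - u.2 * v.1

/-- A 1-form on `ℝ²`, encoded as a map into the continuous linear functionals. -/
abbrev OneForm := (ℝ × ℝ) → ((ℝ × ℝ) →L[ℝ] ℝ)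

/-- `l` is a smooth primitive of `ω₀`: a smooth 1-form with `dl = ω₀`. -/
def IsPrimitive (l : OneForm) : Prop :=
  ContDiff ℝ (⊤ : ℕ∞) l ∧ ∀ z u v, fderiv ℝ l z u v - fderiv ℝ l z v u = omega0 u v

/-- Pullback of a 1-form by a map: `(f*l)(z) = l (f z) ∘ Df(z)`. -/
def pullbackForm (f : ℝ × ℝ → ℝ × ℝ) (l : OneForm) : OneForm :=
  fun z => (l (f z)).comp (fderiv ℝ f z)

/-- The group `Diff_c(ℝ², ω₀)` of smooth, compactly supported, area-preserving
diffeomorphisms of the plane. -/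
structure DiffC where
  toFun : ℝ × ℝ → ℝ × ℝ
  invFun : ℝ × ℝ → ℝ × ℝ
  smooth : ContDiff ℝ (⊤ : ℕ∞) toFun
  smooth_inv : ContDiff ℝ (⊤ : ℕ∞) invFun
  left_inv : Function.LeftInverse invFun toFun
  right_inv : Function.RightInverse invFun toFun
  area : ∀ z u v, omega0 (fderiv ℝ toFun z u) (fderiv ℝ toFun z v) = omega0 u v
  compact : ∃ K : Set (ℝ × ℝ), IsCompact K ∧ ∀ z ∉ K, toFun z = z

/-- `σ` is the action of `f` with respect to the primitive `l`: the unique compactly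
supported smooth function with `dσ = f*l − l`. -/
def IsAction (f : ℝ × ℝ → ℝ × ℝ) (l : OneForm) (σ : ℝ × ℝ → ℝ) : Prop :=
  ContDiff ℝ (⊤ : ℕ∞) σ ∧ HasCompactSupport σ ∧
    ∀ z, fderiv ℝ σ z = pullbackForm f l z - l z

/-- The time-dependent Hamiltonian vector field `X_{H_t} = (∂_y H_t, −∂_x H_t)`,
so that `i_{X_{H_t}} ω₀ = dH_t`. -/
def hamVF (H : ℝ → ℝ × ℝ → ℝ) (t : ℝ) (z : ℝ × ℝ) : ℝ × ℝ :=
  (fderiv ℝ (H t) z (0, 1), - fderiv ℝ (H t) z (1, 0))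


open Set Filter Topology
open scoped NNReal

/-- Componentwise clamp of a vector of the plane to `[-R,R]²`. -/
def clampVec (R : ℝ) (w : ℝ × ℝ) : ℝ × ℝ := (max (-R) (min R w.1), max (-R) (min R w.2))

theorem clampVec_lip (R : ℝ) : LipschitzWith 1 (clampVec R) := by
  have h1 : LipschitzWith 1 (fun w : ℝ × ℝ => max (-R) (min R w.1)) :=
    (LipschitzWith.prod_fst.const_min R).const_max (-R)
  have h2 : LipschitzWith 1 (fun w : ℝ × ℝ => max (-R) (min R w.2)) :=
    (LipschitzWith.prod_snd.const_min R).const_max (-R)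
  have := h1.prodMk h2
  rw [max_self] at this
  exact this

theorem clampVec_norm_le {R : ℝ} (hR : 0 ≤ R) (w : ℝ × ℝ) : ‖clampVec R w‖ ≤ R := by
  rw [clampVec, Prod.norm_def]
  refine max_le ?_ ?_ <;> rw [Real.norm_eq_abs, abs_le] <;> constructor <;> simp <;>
    first | exact Or.inl hR | linarith

theorem clampVec_eq {R : ℝ} {w : ℝ × ℝ} (hw : ‖w‖ ≤ R) : clampVec R w = w := by
  have h1 := abs_le.1 ((norm_fst_le w).trans hw)
  have h2 := abs_le.1 ((norm_snd_le w).trans hw)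
  ext
  · simp only [clampVec]; rw [min_eq_right h1.2, max_eq_right h1.1]
  · simp only [clampVec]; rw [min_eq_right h2.2, max_eq_right h2.1]

theorem clampVec_norm_le_self {R : ℝ} (hR : 0 ≤ R) (w : ℝ × ℝ) : ‖clampVec R w‖ ≤ ‖w‖ := by
  have h0 : clampVec R 0 = 0 := clampVec_eq (by simpa using hR)
  have := (clampVec_lip R).dist_le_mul w 0
  simpa [h0] using this

theorem deriv_Icc_to_Ici {E : Type*} [NormedAddCommGroup E] [NormedSpace ℝ E] {w : ℝ → E} {w' : E}
    {t b : ℝ} (ht : t ∈ Ico (0:ℝ) b) (h : HasDerivWithinAt w w' (Icc 0 b) t) :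
    HasDerivWithinAt w w' (Ici t) t := by
  have h2 : HasDerivWithinAt w w' (Icc t b) t := h.mono (Icc_subset_Icc_left ht.1)
  exact h2.mono_of_mem_nhdsWithin (Icc_mem_nhdsGE ht.2)

/-- Global existence for linear ODEs in the plane. -/
theorem linODE_exists (B : ℝ → (ℝ × ℝ) →L[ℝ] (ℝ × ℝ)) (hB : Continuous B) (M : ℝ≥0)
    (hM : ∀ t, ‖B t‖ ≤ M) (u : ℝ × ℝ) :
    ∃ w : ℝ → ℝ × ℝ, w 0 = u ∧
      (∀ t ∈ Icc (0:ℝ) 1, HasDerivWithinAt w (B t (w t)) (Icc 0 1) t) := by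
  set R : ℝ≥0 := ‖u‖₊ * (Real.toNNReal (Real.exp M)) with hR
  have hpl : IsPicardLindelof (fun t w => B t (clampVec R w)) (tmin := 0) (tmax := 1)
      ⟨0, by simp⟩ u (M * R) 0 (M * R) M := by
    constructor
    · intro t ht
      refine LipschitzWith.lipschitzOnWith ?_
      refine LipschitzWith.of_dist_le_mul fun x y => ?_
      rw [dist_eq_norm, ← map_sub]
      refine (ContinuousLinearMap.le_opNorm _ _).trans ?_
      have := (clampVec_lip R).dist_le_mul x y
      rw [dist_eq_norm] at this
      simp only [NNReal.coe_one, one_mul] at this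
      exact mul_le_mul (hM t) this (norm_nonneg _) M.2
    · intro x hx
      exact (hB.clm_apply continuous_const).continuousOn
    · intro t ht x hx
      refine (ContinuousLinearMap.le_opNorm _ _).trans ?_
      push_cast
      exact mul_le_mul (hM t) (clampVec_norm_le R.2 x) (norm_nonneg _) M.2
    · simp
  obtain ⟨w, hw0, hw⟩ := hpl.exists_eq_forall_mem_Icc_hasDerivWithinAt₀
  simp only at hw0 hw
  refine ⟨w, hw0, ?_⟩
  have hbd := norm_le_gronwallBound_of_norm_deriv_right_le (f := w)
    (f' := fun t => B t (clampVec R (w t))) (δ := ‖u‖) (K := M) (ε := 0) (a := 0) (b := 1)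
    (fun t ht => (hw t ht).continuousWithinAt)
    (fun t ht => deriv_Icc_to_Ici ht (hw t (Ico_subset_Icc_self ht)))
    (by rw [hw0]) (by
      intro t ht
      rw [add_zero]
      refine (ContinuousLinearMap.le_opNorm _ _).trans ?_
      exact mul_le_mul (hM t) (clampVec_norm_le_self R.2 _) (norm_nonneg _) M.2)
  intro t ht
  have h1 := hbd t ht
  rw [gronwallBound_ε0] at h1
  have h2 : ‖w t‖ ≤ R := by
    refine h1.trans ?_
    rw [hR]
    push_cast
    simp only [Real.coe_toNNReal _ (Real.exp_pos _).le]
    gcongr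
    have := ht.2
    have := M.2
    simp only [sub_zero]
    calc (M:ℝ) * t ≤ M * 1 := by gcongr
      _ = M := mul_one _
  have h3 := hw t ht
  rwa [clampVec_eq h2] at h3

/-- Variational equation: the flow of a `C^{1,1}` bounded-derivative vector field is
differentiable in the initial condition. -/
theorem flow_hasFDerivAt (V : ℝ → ℝ × ℝ → ℝ × ℝ) (D : ℝ → ℝ × ℝ → (ℝ × ℝ) →L[ℝ] (ℝ × ℝ))
    (hVD : ∀ t z, HasFDerivAt (V t) (D t z) z)
    (hDc : Continuous (fun p : ℝ × (ℝ × ℝ) => D p.1 p.2))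
    (M C : ℝ≥0) (hM : ∀ t z, ‖D t z‖ ≤ M) (hC : ∀ t z z', ‖D t z - D t z'‖ ≤ C * ‖z - z'‖)
    (φ : ℝ → ℝ × ℝ → ℝ × ℝ) (hφ0 : ∀ z, φ 0 z = z)
    (hflow : ∀ t z, HasDerivAt (fun s => φ s z) (V t (φ t z)) t) :
    (∀ t ∈ Icc (0:ℝ) 1, LipschitzWith (Real.toNNReal (Real.exp M)) (φ t)) ∧
    ∃ A : ℝ → ℝ × ℝ → (ℝ × ℝ) →L[ℝ] (ℝ × ℝ),
      (∀ z, A 0 z = ContinuousLinearMap.id ℝ (ℝ × ℝ)) ∧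
      (∀ z, ∀ t ∈ Icc (0:ℝ) 1, ∀ u,
        HasDerivWithinAt (fun s => A s z u) (D t (φ t z) (A t z u)) (Icc 0 1) t) ∧
      (∀ z, ∀ t ∈ Icc (0:ℝ) 1, HasFDerivAt (φ t) (A t z) z) ∧
      (∀ z, ContinuousOn (fun t => A t z) (Icc 0 1)) := by
  have hφc : ∀ z, Continuous (fun s => φ s z) := fun z =>
    continuous_iff_continuousAt.2 fun t => (hflow t z).continuousAt
  have hVlip : ∀ t, LipschitzWith M (V t) := fun t =>
    lipschitzWith_of_nnnorm_fderiv_le (𝕜 := ℝ) (fun z => (hVD t z).differentiableAt)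
      (fun z => by rw [(hVD t z).fderiv]; exact hM t z)
  have hlip : ∀ t ∈ Icc (0:ℝ) 1, LipschitzWith (Real.toNNReal (Real.exp M)) (φ t) := by
    intro t ht
    refine LipschitzWith.of_dist_le_mul fun x y => ?_
    have := dist_le_of_trajectories_ODE (v := V) (K := M) (a := 0) (b := 1) (δ := dist x y)
      hVlip (hφc x).continuousOn (fun t _ => (hflow t x).hasDerivWithinAt)
      (hφc y).continuousOn (fun t _ => (hflow t y).hasDerivWithinAt) (by simp [hφ0]) t ht
    refine this.trans ?_
    rw [mul_comm]
    simp only [Real.coe_toNNReal _ (Real.exp_pos _).le]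
    gcongr
    have := ht.2
    have := M.2
    calc (M:ℝ) * (t - 0) ≤ M * 1 := by gcongr; linarith
      _ = M := mul_one _
  refine ⟨hlip, ?_⟩
  have hBc : ∀ z, Continuous (fun t => D t (φ t z)) := fun z =>
    hDc.comp (continuous_id.prodMk (hφc z))
  choose w hw0 hw using fun (z u : ℝ × ℝ) =>
    linODE_exists (fun t => D t (φ t z)) (hBc z) M (fun t => hM _ _) u
  let A : ℝ → ℝ × ℝ → (ℝ × ℝ) →L[ℝ] (ℝ × ℝ) := fun t z =>
    (ContinuousLinearMap.fst ℝ ℝ ℝ).smulRight (w z (1,0) t) +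
      (ContinuousLinearMap.snd ℝ ℝ ℝ).smulRight (w z (0,1) t)
  have hAu : ∀ t z u, A t z u = u.1 • w z (1,0) t + u.2 • w z (0,1) t := by
    intro t z u; simp [A]
  have hAd : ∀ z, ∀ t ∈ Icc (0:ℝ) 1, ∀ u,
        HasDerivWithinAt (fun s => A s z u) (D t (φ t z) (A t z u)) (Icc 0 1) t := by
    intro z t ht u
    simp only [hAu, map_add, map_smul]
    exact ((hw z (1,0) t ht).const_smul u.1).add ((hw z (0,1) t ht).const_smul u.2)
  have hA0 : ∀ z, A 0 z = ContinuousLinearMap.id ℝ (ℝ × ℝ) := by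
    intro z
    ext <;> simp [hAu, hw0]
  refine ⟨A, hA0, hAd, ?_, ?_⟩
  · intro z t ht
    rw [hasFDerivAt_iff_isLittleO_nhds_zero]
    set e := Real.exp M with he
    set c := gronwallBound 0 (M:ℝ) (C * e * e) t with hc
    have key : ∀ h : ℝ × ℝ, ‖φ t (z + h) - φ t z - A t z h‖ ≤
        gronwallBound 0 (M:ℝ) ((C * e * e) * ‖h‖^2) t := by
      intro h
      have := norm_le_gronwallBound_of_norm_deriv_right_le
        (f := fun t => φ t (z + h) - φ t z - A t z h)
        (f' := fun t => V t (φ t (z + h)) - V t (φ t z) - D t (φ t z) (A t z h))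
        (δ := 0) (K := M) (ε := (C * e * e) * ‖h‖^2) (a := 0) (b := 1)
        (((hφc _).sub (hφc _)).continuousOn.sub
          (fun t ht => (hAd z t ht h).continuousWithinAt))
        (fun t ht => ((hflow t _).hasDerivWithinAt.sub (hflow t _).hasDerivWithinAt).sub
          (deriv_Icc_to_Ici ht (hAd z t (Ico_subset_Icc_self ht) h)))
        (by simp [hφ0, hA0]) ?_ t ht
      · simpa using this
      · intro s hs
        have hd : ‖φ s (z + h) - φ s z‖ ≤ e * ‖h‖ := by
          have := (hlip s (Ico_subset_Icc_self hs)).dist_le_mul (z + h) z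
          rw [dist_eq_norm, dist_eq_norm, Real.coe_toNNReal _ (Real.exp_pos _).le] at this
          simpa using this
        set y := φ s (z + h)
        set x := φ s z
        have hmv : ‖V s y - V s x - D s x (y - x)‖ ≤ (C * ‖y - x‖) * ‖y - x‖ := by
          refine (convex_closedBall x ‖y - x‖).norm_image_sub_le_of_norm_hasFDerivWithin_le'
            (f' := D s) (fun p _ => (hVD s p).hasFDerivWithinAt) (fun p hp => ?_)
            (by simp) (by simp [dist_eq_norm])
          refine (hC s p x).trans ?_
          gcongr
          simpa [dist_eq_norm] using hp
        have e1 : V s y - V s x - D s x (A s z h) =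
            (V s y - V s x - D s x (y - x)) + D s x (y - x - A s z h) := by
          rw [map_sub (D s x) (y - x)]; abel
        rw [e1]
        refine (norm_add_le _ _).trans ?_
        rw [add_comm]
        refine add_le_add ?_ ?_
        · refine (ContinuousLinearMap.le_opNorm _ _).trans ?_
          gcongr
          exact hM _ _
        · refine hmv.trans ?_
          calc C * ‖y - x‖ * ‖y - x‖ ≤ C * (e * ‖h‖) * (e * ‖h‖) := by gcongr
            _ = _ := by ring
    have hlin : ∀ r : ℝ, gronwallBound 0 (M:ℝ) ((C * e * e) * r) t = c * r := by
      intro r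
      rw [hc]
      by_cases hM0 : (M:ℝ) = 0
      · rw [hM0]; simp only [gronwallBound_K0]; ring
      · simp only [gronwallBound_of_K_ne_0 hM0]; ring
    refine Asymptotics.IsBigO.trans_isLittleO (g := fun h : ℝ × ℝ => ‖h‖^2) ?_ ?_
    · refine Asymptotics.IsBigO.of_bound c (Eventually.of_forall fun h => ?_)
      refine (key h).trans ?_
      rw [hlin]; simp
    · have := Asymptotics.isLittleO_pow_id (𝕜 := ℝ) (n := 2) (by norm_num)
      have h2 := this.comp_tendsto (tendsto_norm_zero (E := ℝ × ℝ))
      exact (Asymptotics.isLittleO_norm_right).1 h2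
  · intro z t ht
    have h1 : ContinuousWithinAt (fun s => w z (1,0) s) (Icc 0 1) t := (hw z (1,0) t ht).continuousWithinAt
    have h2 : ContinuousWithinAt (fun s => w z (0,1) s) (Icc 0 1) t := (hw z (0,1) t ht).continuousWithinAt
    refine ContinuousWithinAt.add ?_ ?_
    · exact ((ContinuousLinearMap.smulRightL ℝ (ℝ × ℝ) (ℝ × ℝ) (ContinuousLinearMap.fst ℝ ℝ ℝ)).continuous.continuousAt).comp_continuousWithinAt h1
    · exact ((ContinuousLinearMap.smulRightL ℝ (ℝ × ℝ) (ℝ × ℝ) (ContinuousLinearMap.snd ℝ ℝ ℝ)).continuous.continuousAt).comp_continuousWithinAt h2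

theorem omega0_expand (α : (ℝ × ℝ) →L[ℝ] ℝ) (v : ℝ × ℝ) :
    omega0 (α (0, 1), - α (1, 0)) v = α v := by
  have : v = v.1 • ((1:ℝ), (0:ℝ)) + v.2 • ((0:ℝ), (1:ℝ)) := by ext <;> simp
  conv_rhs => rw [this, map_add, map_smul, map_smul]
  simp only [omega0, smul_eq_mul]; ring

theorem det_eq_omega0 (A : (ℝ × ℝ) →L[ℝ] (ℝ × ℝ)) : A.det = omega0 (A (1,0)) (A (0,1)) := by
  have : A.det = LinearMap.det (A : (ℝ × ℝ) →ₗ[ℝ] (ℝ × ℝ)) := rfl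
  rw [this, ← LinearMap.det_toMatrix (Module.Basis.finTwoProd ℝ), Matrix.det_fin_two]
  simp [LinearMap.toMatrix_apply, omega0]; ring

/-- Change of variables for an injective map of Jacobian one that is the identity outside
a compact set. -/
theorem integral_comp_area (f : ℝ × ℝ → ℝ × ℝ) (f' : ℝ × ℝ → (ℝ × ℝ) →L[ℝ] (ℝ × ℝ))
    (hf : ∀ z, HasFDerivAt f (f' z) z) (hdet : ∀ z, (f' z).det = 1) (hinj : Function.Injective f)
    (K : Set (ℝ × ℝ)) (hK : IsCompact K) (hfK : ∀ z ∉ K, f z = z) (F : ℝ × ℝ → ℝ)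
    (hF : ∀ z ∉ K, F z = 0) : ∫ z, F (f z) = ∫ z, F z := by
  have h1 := integral_image_eq_integral_abs_det_fderiv_smul (volume : Measure (ℝ × ℝ))
    (s := univ) (f := f) (f' := f') MeasurableSet.univ (fun z _ => (hf z).hasFDerivWithinAt)
    hinj.injOn F
  simp only [hdet, abs_one, one_smul, setIntegral_univ] at h1
  rw [← h1]
  have h2 := lintegral_abs_det_fderiv_eq_addHaar_image (volume : Measure (ℝ × ℝ))
    (s := K) (f := f) (f' := f') hK.measurableSet (fun z _ => (hf z).hasFDerivWithinAt)
    hinj.injOn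
  simp only [hdet, abs_one, ENNReal.ofReal_one, lintegral_const, one_mul,
    Measure.restrict_apply_univ] at h2
  have hsub : f '' K ⊆ K := by
    rintro _ ⟨z, hz, rfl⟩
    by_contra h
    have h3 := hfK _ h
    have := hinj h3
    rw [this] at h
    exact h hz
  have hfc : Continuous f := continuous_iff_continuousAt.2 fun z => (hf z).continuousAt
  have hnull : volume (K \ f '' K) = 0 := by
    rw [measure_sdiff hsub (hK.image hfc).measurableSet.nullMeasurableSet
      (hK.image hfc).measure_lt_top.ne, ← h2, tsub_self]
  symm
  symm
  refine setIntegral_eq_integral_of_ae_compl_eq_zero ?_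
  have hae : ∀ᵐ z : ℝ × ℝ, z ∉ K \ f '' K := measure_eq_zero_iff_ae_notMem.1 hnull
  filter_upwards [hae] with z hz hz2
  apply hF
  intro hzK
  apply hz
  refine ⟨hzK, fun h => hz2 (image_mono (subset_univ K) h)⟩

theorem flow_injective (V : ℝ → ℝ × ℝ → ℝ × ℝ) (M : ℝ≥0) (hV : ∀ t, LipschitzWith M (V t))
    (φ : ℝ → ℝ × ℝ → ℝ × ℝ) (hφ0 : ∀ z, φ 0 z = z)
    (hflow : ∀ t z, HasDerivAt (fun s => φ s z) (V t (φ t z)) t) (t : ℝ) (ht : 0 ≤ t) :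
    Function.Injective (φ t) := by
  have hφc : ∀ z, Continuous (fun s => φ s z) := fun z =>
    continuous_iff_continuousAt.2 fun t => (hflow t z).continuousAt
  intro x y hxy
  have := ODE_solution_unique_of_mem_Icc_left (v := V) (s := fun _ => univ) (K := M)
    (f := fun s => φ s x) (g := fun s => φ s y) (a := 0) (b := t)
    (fun s _ => (hV s).lipschitzOnWith) (hφc x).continuousOn
    (fun s _ => (hflow s x).hasDerivWithinAt) (fun _ _ => trivial) (hφc y).continuousOn
    (fun s _ => (hflow s y).hasDerivWithinAt) (fun _ _ => trivial) hxy
  have h := this (left_mem_Icc.2 ht)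
  simpa [hφ0] using h

theorem flow_fixed (V : ℝ → ℝ × ℝ → ℝ × ℝ) (M : ℝ≥0) (hV : ∀ t, LipschitzWith M (V t))
    (φ : ℝ → ℝ × ℝ → ℝ × ℝ) (hφ0 : ∀ z, φ 0 z = z)
    (hflow : ∀ t z, HasDerivAt (fun s => φ s z) (V t (φ t z)) t) (t : ℝ) (ht : 0 ≤ t)
    (z : ℝ × ℝ) (hz : ∀ s, V s z = 0) : φ t z = z := by
  have hφc : Continuous (fun s => φ s z) :=
    continuous_iff_continuousAt.2 fun t => (hflow t z).continuousAt
  have := dist_le_of_trajectories_ODE (v := V) (K := M) (a := 0) (b := t) (δ := 0)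
      (f := fun s => φ s z) (g := fun _ => z)
      hV hφc.continuousOn (fun t _ => (hflow t z).hasDerivWithinAt)
      continuousOn_const (fun t _ => by rw [hz]; exact hasDerivWithinAt_const _ _ _)
      (by simp [hφ0]) t (right_mem_Icc.2 ht)
  rw [zero_mul] at this
  exact dist_le_zero.1 this

/-- Integration by parts: `∫ l(X_h) = ∫ h`. -/
theorem integral_primitive (l : OneForm) (hl : IsPrimitive l) (h : ℝ × ℝ → ℝ)
    (hh : ContDiff ℝ (⊤ : ℕ∞) h) (hc : HasCompactSupport h) :
    ∫ z, l z (fderiv ℝ h z (0,1), - fderiv ℝ h z (1,0)) = ∫ z, h z := by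
  have hl1 := hl.1
  have hld : Differentiable ℝ l := hl1.differentiable (by simp)
  have hcf : ∀ v : ℝ × ℝ, Continuous (fun z => fderiv ℝ h z v) := fun v =>
    (hh.continuous_fderiv (by simp)).clm_apply continuous_const
  have hcs : ∀ v : ℝ × ℝ, HasCompactSupport (fun z => fderiv ℝ h z v) := fun v =>
    hc.fderiv_apply ℝ v
  have hlv : ∀ v, Continuous (fun z => l z v) := fun v =>
    hl1.continuous.clm_apply continuous_const
  have hfl : ∀ u v z, fderiv ℝ (fun z => l z u) z v = fderiv ℝ l z v u := by
    intro u v z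
    have h1 : HasFDerivAt (fun z => l z u) ((ContinuousLinearMap.apply ℝ ℝ u).comp (fderiv ℝ l z)) z :=
      ((ContinuousLinearMap.apply ℝ ℝ u).hasFDerivAt).comp z (hld z).hasFDerivAt
    rw [h1.fderiv]; rfl
  have hfc : ∀ u v, Continuous (fun z => fderiv ℝ l z v u) := fun u v =>
    ((hl1.continuous_fderiv (by simp)).clm_apply continuous_const).clm_apply continuous_const
  have i1 : ∀ u v, Integrable (fun z => fderiv ℝ l z v u * h z) := fun u v =>
    ((hfc u v).mul hh.continuous).integrable_of_hasCompactSupport hc.mul_left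
  have i2 : ∀ u v, Integrable (fun z => l z u * fderiv ℝ h z v) := fun u v =>
    ((hlv u).mul (hcf v)).integrable_of_hasCompactSupport (hcs v).mul_left
  have ibp : ∀ u v, ∫ z, l z u * fderiv ℝ h z v = - ∫ z, fderiv ℝ l z v u * h z := by
    intro u v
    have := integral_mul_fderiv_eq_neg_fderiv_mul_of_integrable (μ := (volume : Measure (ℝ × ℝ)))
      (f := fun z => l z u) (g := h) (v := v) (by simpa only [hfl] using i1 u v) (i2 u v)
      (((hlv u).mul hh.continuous).integrable_of_hasCompactSupport hc.mul_left)
      (fun z _ => (hld z).clm_apply (differentiableAt_const _))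
      (fun z _ => hh.differentiable (by simp) z)
    simpa only [hfl] using this
  have e1 : ∀ z, l z (fderiv ℝ h z (0,1), - fderiv ℝ h z (1,0)) =
      l z (1,0) * fderiv ℝ h z (0,1) - l z (0,1) * fderiv ℝ h z (1,0) := by
    intro z
    have : ((fderiv ℝ h z (0,1), - fderiv ℝ h z (1,0)) : ℝ × ℝ) =
      fderiv ℝ h z (0,1) • ((1:ℝ),(0:ℝ)) + (- fderiv ℝ h z (1,0)) • ((0:ℝ),(1:ℝ)) := by
      ext <;> simp
    rw [this, map_add, map_smul, map_smul]; simp only [smul_eq_mul]; ring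
  simp only [e1]
  rw [integral_sub (i2 _ _) (i2 _ _), ibp, ibp, sub_neg_eq_add, neg_add_eq_sub,
    ← integral_sub (i1 _ _) (i1 _ _)]
  congr 1
  ext z
  rw [← sub_mul, hl.2]
  simp [omega0]

/-- The Calabi invariant of the time-1 map of a compactly supported Hamiltonian flow
is given by `CAL(φ) = 2 ∫₀¹ ∫_{ℝ²} H(t,z) dz dt`. -/
theorem statement10 (H : ℝ → ℝ × ℝ → ℝ)
    (hH : ContDiff ℝ (⊤ : ℕ∞) (fun p : ℝ × (ℝ × ℝ) => H p.1 p.2))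
    (hHsupp : HasCompactSupport (fun p : ℝ × (ℝ × ℝ) => H p.1 p.2))
    (φ : ℝ → ℝ × ℝ → ℝ × ℝ)
    (hφ0 : ∀ z, φ 0 z = z)
    (hflow : ∀ t z, HasDerivAt (fun s => φ s z) (hamVF H t (φ t z)) t)
    (l : OneForm) (hl : IsPrimitive l)
    (σ : ℝ × ℝ → ℝ) (hσ : IsAction (φ 1) l σ) :
    ∫ z : ℝ × ℝ, σ z = 2 * ∫ t in (0:ℝ)..1, ∫ z : ℝ × ℝ, H t z := by
  have hHd : ∀ t z, HasFDerivAt (H t)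
      ((fderiv ℝ (fun p : ℝ × (ℝ × ℝ) => H p.1 p.2) (t, z)).comp
        (ContinuousLinearMap.inr ℝ ℝ (ℝ × ℝ))) z := by
    intro t z
    have h1 : HasFDerivAt (fun p : ℝ × (ℝ × ℝ) => H p.1 p.2) _ (t, z) :=
      (hH.differentiable (by simp) (t, z)).hasFDerivAt
    exact h1.comp z (hasFDerivAt_prodMk_right t z)
  have hHt : ∀ t, ContDiff ℝ (⊤ : ℕ∞) (H t) := fun t =>
    hH.comp (contDiff_const.prodMk contDiff_id)
  set Hh : ℝ × (ℝ × ℝ) → ℝ := fun p => H p.1 p.2 with hHh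
  -- the vector field
  set V : ℝ → ℝ × ℝ → ℝ × ℝ := hamVF H with hV
  let Vh : ℝ × (ℝ × ℝ) → ℝ × ℝ := fun p => V p.1 p.2
  have hVh : Vh = fun p => (fderiv ℝ Hh p (0, (0, 1)), - fderiv ℝ Hh p (0, (1, 0))) := by
    funext p
    simp only [Vh, hV, hamVF, (hHd p.1 p.2).fderiv]
    simp
  have hfH : ContDiff ℝ (⊤ : ℕ∞) (fderiv ℝ Hh) := hH.fderiv_right (by simp)
  have hVs : ContDiff ℝ (⊤ : ℕ∞) Vh := by
    rw [hVh]
    exact (hfH.clm_apply contDiff_const).prodMk (hfH.clm_apply contDiff_const).neg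
  have hVc : HasCompactSupport Vh := by
    have h1 : HasCompactSupport (fderiv ℝ Hh) := hHsupp.fderiv ℝ
    rw [hVh]
    exact h1.comp_left (g := fun α : (ℝ × (ℝ × ℝ)) →L[ℝ] ℝ => (α (0, (0, 1)), - α (0, (1, 0))))
      (by simp)
  let D : ℝ → ℝ × ℝ → (ℝ × ℝ) →L[ℝ] (ℝ × ℝ) := fun t z =>
    (fderiv ℝ Vh (t, z)).comp (ContinuousLinearMap.inr ℝ ℝ (ℝ × ℝ))
  have hVD : ∀ t z, HasFDerivAt (V t) (D t z) z := by
    intro t z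
    have h1 : HasFDerivAt Vh _ (t, z) := (hVs.differentiable (by simp) (t, z)).hasFDerivAt
    exact h1.comp z (hasFDerivAt_prodMk_right t z)
  let Dh : ℝ × (ℝ × ℝ) → (ℝ × ℝ) →L[ℝ] (ℝ × ℝ) := fun p => D p.1 p.2
  have hDs : ContDiff ℝ (⊤ : ℕ∞) Dh := by
    have : ContDiff ℝ (⊤ : ℕ∞) (fderiv ℝ Vh) := hVs.fderiv_right (by simp)
    exact this.clm_comp contDiff_const
  have hDcs : HasCompactSupport Dh := by
    have h1 : HasCompactSupport (fderiv ℝ Vh) := hVc.fderiv ℝ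
    exact h1.comp_left (g := fun α : (ℝ × (ℝ × ℝ)) →L[ℝ] (ℝ × ℝ) =>
      α.comp (ContinuousLinearMap.inr ℝ ℝ (ℝ × ℝ))) (by simp)
  obtain ⟨M, hM⟩ : ∃ M : ℝ≥0, ∀ t z, ‖D t z‖ ≤ M := by
    obtain ⟨M, hM⟩ := hDcs.exists_bound_of_continuous hDs.continuous
    exact ⟨M.toNNReal, fun t z => (hM (t, z)).trans (Real.le_coe_toNNReal _)⟩
  obtain ⟨C, hC⟩ : ∃ C : ℝ≥0, ∀ t z z', ‖D t z - D t z'‖ ≤ C * ‖z - z'‖ := by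
    obtain ⟨C, hC⟩ := hDs.lipschitzWith_of_hasCompactSupport hDcs (by simp)
    refine ⟨C, fun t z z' => ?_⟩
    have := hC.dist_le_mul (t, z) (t, z')
    simpa [dist_eq_norm, Dh, Prod.norm_def] using this
  have hVlip : ∀ t, LipschitzWith M (V t) := fun t =>
    lipschitzWith_of_nnnorm_fderiv_le (𝕜 := ℝ) (fun z => (hVD t z).differentiableAt)
      (fun z => by rw [(hVD t z).fderiv]; exact hM t z)
  obtain ⟨hφlip, A, hA0, hAd, hAf, hAc⟩ :=
    flow_hasFDerivAt V D hVD hDs.continuous M C hM hC φ hφ0 hflow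
  have hφc : ∀ z, Continuous (fun s => φ s z) := fun z =>
    continuous_iff_continuousAt.2 fun t => (hflow t z).continuousAt
  -- compact set
  obtain ⟨K, hKc, hKH⟩ : ∃ K : Set (ℝ × ℝ), IsCompact K ∧ ∀ z ∉ K, ∀ t, (t, z) ∉ tsupport Hh := by
    refine ⟨Prod.snd '' tsupport Hh, hHsupp.isCompact.image continuous_snd, fun z hz t h => ?_⟩
    exact hz ⟨_, h, rfl⟩
  have hH0 : ∀ z ∉ K, ∀ t, H t z = 0 := fun z hz t =>
    image_eq_zero_of_notMem_tsupport (f := Hh) (hKH z hz t)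
  have hV0 : ∀ z ∉ K, ∀ t, V t z = 0 := by
    intro z hz t
    have h1 : fderiv ℝ Hh (t, z) = 0 := by
      have := (notMem_tsupport_iff_eventuallyEq.1 (hKH z hz t)).fderiv_eq (𝕜 := ℝ)
      rw [this]; simp
    have h2 : V t z = Vh (t, z) := rfl
    rw [h2, hVh]; simp [h1]
  have hφK : ∀ t ∈ Icc (0:ℝ) 1, ∀ z ∉ K, φ t z = z := fun t ht z hz =>
    flow_fixed V M hVlip φ hφ0 hflow t ht.1 z (hV0 z hz)
  -- area preservation
  have homV : ∀ t z v, omega0 (V t z) v = fderiv ℝ (H t) z v := fun t z v => omega0_expand _ v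
  have hHess : ∀ t z w v, omega0 (D t z w) v = fderiv ℝ (fderiv ℝ (H t)) z w v := by
    intro t z w v
    have h1 : HasFDerivAt (fun z => omega0 (V t z) v)
        ((v.2 • (ContinuousLinearMap.fst ℝ ℝ ℝ) - v.1 • (ContinuousLinearMap.snd ℝ ℝ ℝ)).comp
          (D t z)) z := by
      have := ((v.2 • (ContinuousLinearMap.fst ℝ ℝ ℝ) -
        v.1 • (ContinuousLinearMap.snd ℝ ℝ ℝ)).hasFDerivAt).comp z (hVD t z)
      refine this.congr_of_eventuallyEq (Eventually.of_forall fun y => ?_)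
      simp [omega0]; ring
    have hd2 : HasFDerivAt (fderiv ℝ (H t)) (fderiv ℝ (fderiv ℝ (H t)) z) z :=
      (((hHt t).fderiv_right (m := (⊤ : ℕ∞)) (by simp)).differentiable (by simp) z).hasFDerivAt
    have h2 : HasFDerivAt (fun z => fderiv ℝ (H t) z v)
        ((ContinuousLinearMap.apply ℝ ℝ v).comp (fderiv ℝ (fderiv ℝ (H t)) z)) z :=
      ((ContinuousLinearMap.apply ℝ ℝ v).hasFDerivAt).comp z hd2
    simp only [homV] at h1
    have h3 := congrArg (fun α : (ℝ × ℝ) →L[ℝ] ℝ => α w) (h1.unique h2)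
    simp only [ContinuousLinearMap.comp_apply] at h3
    rw [ContinuousLinearMap.apply_apply] at h3
    rw [← h3]
    simp [omega0]; ring
  have hsymm : ∀ t z w v, omega0 (D t z w) v + omega0 w (D t z v) = 0 := by
    intro t z w v
    have h1 : omega0 w (D t z v) = - omega0 (D t z v) w := by simp [omega0]; ring
    have h2 : IsSymmSndFDerivAt ℝ (H t) z :=
      (hHt t).contDiffAt.isSymmSndFDerivAt (by
        rw [minSmoothness_of_isRCLikeNormedField]
        exact (WithTop.coe_le_coe (b := (2 : ℕ∞)) (a := (⊤ : ℕ∞))).2 le_top)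
    rw [h1, hHess, hHess, h2 w v]; ring
  have hdet : ∀ t ∈ Icc (0:ℝ) 1, ∀ z, (A t z).det = 1 := by
    intro t ht z
    rw [det_eq_omega0]
    have hd : ∀ s ∈ Icc (0:ℝ) 1, HasDerivWithinAt (fun s => omega0 (A s z (1,0)) (A s z (0,1)))
        0 (Icc 0 1) s := by
      intro s hs
      have h1 := hAd z s hs (1,0)
      have h2 := hAd z s hs (0,1)
      have h11 := (ContinuousLinearMap.fst ℝ ℝ ℝ).hasFDerivAt.comp_hasDerivWithinAt s h1
      have h12 := (ContinuousLinearMap.snd ℝ ℝ ℝ).hasFDerivAt.comp_hasDerivWithinAt s h1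
      have h21 := (ContinuousLinearMap.fst ℝ ℝ ℝ).hasFDerivAt.comp_hasDerivWithinAt s h2
      have h22 := (ContinuousLinearMap.snd ℝ ℝ ℝ).hasFDerivAt.comp_hasDerivWithinAt s h2
      have h3 := (h11.mul h22).sub (h12.mul h21)
      refine (h3.congr_deriv ?_)
      refine Eq.trans ?_ (hsymm s (φ s z) (A s z (1,0)) (A s z (0,1)))
      simp [omega0]; ring
    have := constant_of_has_deriv_right_zero (a := 0) (b := 1)
      (f := fun s => omega0 (A s z (1,0)) (A s z (0,1)))
      (fun s hs => (hd s hs).continuousWithinAt)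
      (fun s hs => deriv_Icc_to_Ici hs (hd s (Ico_subset_Icc_self hs))) t ht
    rw [this, hA0]; simp [omega0]
  -- the generating function
  let G : ℝ → ℝ × ℝ → ℝ := fun t z => l z (V t z) + H t z
  let Gh : ℝ × (ℝ × ℝ) → ℝ := fun p => G p.1 p.2
  have hls := hl.1
  have hGs : ContDiff ℝ (⊤ : ℕ∞) Gh := ((hls.comp contDiff_snd).clm_apply hVs).add hH
  have hGc : HasCompactSupport Gh := by
    refine HasCompactSupport.add ?_ hHsupp
    refine hVc.mono' ?_
    intro p hp
    refine subset_tsupport _ ?_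
    intro h0
    apply hp
    have : V p.1 p.2 = 0 := h0
    simp [this]
  have hG0 : ∀ z ∉ K, ∀ t, G t z = 0 := fun z hz t => by simp [G, hV0 z hz t, hH0 z hz t]
  let G' : ℝ → ℝ × ℝ → (ℝ × ℝ) →L[ℝ] ℝ := fun t z =>
    (fderiv ℝ Gh (t, z)).comp (ContinuousLinearMap.inr ℝ ℝ (ℝ × ℝ))
  have hGd : ∀ t z, HasFDerivAt (G t) (G' t z) z := by
    intro t z
    have h1 : HasFDerivAt Gh _ (t, z) := (hGs.differentiable (by simp) (t, z)).hasFDerivAt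
    exact h1.comp z (hasFDerivAt_prodMk_right t z)
  have hG'c : Continuous (fun p : ℝ × (ℝ × ℝ) => G' p.1 p.2) :=
    (hGs.continuous_fderiv (by simp)).clm_comp continuous_const
  have hG'v : ∀ t z w, G' t z w = fderiv ℝ l z w (V t z) + l z (D t z w) + fderiv ℝ (H t) z w := by
    intro t z w
    have h1 : HasFDerivAt l (fderiv ℝ l z) z := (hls.differentiable (by simp) z).hasFDerivAt
    have h2 := (h1.clm_apply (hVD t z)).add ((hHt t).differentiable (by simp) z).hasFDerivAt
    rw [(hGd t z).unique h2]
    simp [add_comm]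
  obtain ⟨N, hN⟩ : ∃ N : ℝ, ∀ t z, ‖G' t z‖ ≤ N := by
    have h1 : HasCompactSupport (fun p : ℝ × (ℝ × ℝ) => G' p.1 p.2) :=
      (hGc.fderiv ℝ).comp_left (g := fun α : (ℝ × (ℝ × ℝ)) →L[ℝ] ℝ =>
        α.comp (ContinuousLinearMap.inr ℝ ℝ (ℝ × ℝ))) (by simp)
    obtain ⟨N, hN⟩ := h1.exists_bound_of_continuous hG'c
    exact ⟨N, fun t z => hN (t, z)⟩
  let τ : ℝ × ℝ → ℝ := fun z => ∫ t in (0:ℝ)..1, G t (φ t z)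
  have hFc : ∀ z, Continuous (fun t => G t (φ t z)) := fun z =>
    hGs.continuous.comp (continuous_id.prodMk (hφc z))
  have hF'c : ∀ z, ContinuousOn (fun t => (G' t (φ t z)).comp (A t z)) (Icc 0 1) := fun z =>
    (hG'c.comp (continuous_id.prodMk (hφc z))).continuousOn.clm_comp (hAc z)
  have hAb : ∀ t ∈ Icc (0:ℝ) 1, ∀ z, ‖A t z‖ ≤ Real.exp M := by
    intro t ht z
    have := (hAf z t ht).le_of_lipschitz (hφlip t ht)
    rwa [Real.coe_toNNReal _ (Real.exp_pos _).le] at this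
  have hIoc : uIoc (0:ℝ) 1 ⊆ Icc 0 1 := by
    rw [uIoc_of_le zero_le_one]; exact Ioc_subset_Icc_self
  have hF'i : ∀ z, IntervalIntegrable (fun t => (G' t (φ t z)).comp (A t z)) volume 0 1 := fun z =>
    ContinuousOn.intervalIntegrable_of_Icc zero_le_one (hF'c z)
  have hτd : ∀ z, HasFDerivAt τ (∫ t in (0:ℝ)..1, (G' t (φ t z)).comp (A t z)) z := by
    intro z
    refine intervalIntegral.hasFDerivAt_integral_of_dominated_of_fderiv_le (s := univ)
      (F := fun z t => G t (φ t z)) (F' := fun z t => (G' t (φ t z)).comp (A t z))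
      (bound := fun _ => N * Real.exp M)
      univ_mem (Eventually.of_forall fun y => (hFc y).aestronglyMeasurable)
      ((hFc z).intervalIntegrable _ _) ?_ ?_ intervalIntegrable_const ?_
    · exact ((intervalIntegrable_iff.1 (hF'i z))).aestronglyMeasurable
    · refine Eventually.of_forall fun t ht y _ => ?_
      refine (ContinuousLinearMap.opNorm_comp_le _ _).trans ?_
      exact mul_le_mul (hN _ _) (hAb t (hIoc ht) y) (norm_nonneg _)
        ((norm_nonneg _).trans (hN 0 0))
    · refine Eventually.of_forall fun t ht y _ => ?_
      exact (hGd t (φ t y)).comp y (hAf y t (hIoc ht))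
  have h01 : (1:ℝ) ∈ Icc (0:ℝ) 1 := by simp
  have h00 : (0:ℝ) ∈ Icc (0:ℝ) 1 := by simp
  have hτσ : ∀ z, (∫ t in (0:ℝ)..1, (G' t (φ t z)).comp (A t z)) =
      pullbackForm (φ 1) l z - l z := by
    intro z
    refine ContinuousLinearMap.ext fun u => ?_
    rw [ContinuousLinearMap.intervalIntegral_apply (hF'i z)]
    have hd : ∀ t ∈ Icc (0:ℝ) 1, HasDerivWithinAt (fun s => l (φ s z) (A s z u))
        (((G' t (φ t z)).comp (A t z)) u) (Icc 0 1) t := by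
      intro t ht
      have h1 : HasFDerivAt l (fderiv ℝ l (φ t z)) (φ t z) :=
        (hls.differentiable (by simp) _).hasFDerivAt
      have h2 := h1.comp_hasDerivWithinAt t ((hflow t z).hasDerivWithinAt (s := Icc 0 1))
      have h3 := h2.clm_apply (hAd z t ht u)
      refine h3.congr_deriv ?_
      have e1 : ((G' t (φ t z)).comp (A t z)) u = G' t (φ t z) (A t z u) := rfl
      rw [e1, hG'v, ← homV, ← hl.2 (φ t z)]
      simp only [Function.comp_apply]
      ring
    have hftc := intervalIntegral.integral_eq_sub_of_hasDerivAt_of_le zero_le_one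
      (f := fun s => l (φ s z) (A s z u)) (f' := fun t => ((G' t (φ t z)).comp (A t z)) u)
      (fun t ht => (hd t ht).continuousWithinAt)
      (fun t ht => (hd t (Ioo_subset_Icc_self ht)).hasDerivAt (Icc_mem_nhds ht.1 ht.2))
      (ContinuousOn.intervalIntegrable_of_Icc zero_le_one
        ((hF'c z).clm_apply continuousOn_const))
    rw [hftc, hφ0, hA0]
    simp [pullbackForm, (hAf z 1 h01).fderiv]
  have hτ0 : ∀ z ∉ K, τ z = 0 := by
    intro z hz
    simp only [τ]
    rw [intervalIntegral.integral_congr (g := fun _ => (0:ℝ))]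
    · simp
    · intro t ht
      rw [uIcc_of_le zero_le_one] at ht
      simp only
      rw [hφK t ht z hz, hG0 z hz]
  obtain ⟨hσs, hσc, hσd⟩ := hσ
  have hστ : ∀ z, σ z = τ z := by
    have hd : ∀ z, HasFDerivAt (fun z => σ z - τ z) (0 : (ℝ × ℝ) →L[ℝ] ℝ) z := by
      intro z
      have h1 := (hσs.differentiable (by simp) z).hasFDerivAt.sub (hτd z)
      rw [hσd, hτσ, sub_self] at h1
      exact h1
    have hconst := is_const_of_fderiv_eq_zero (𝕜 := ℝ) (f := fun z => σ z - τ z)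
      (fun z => (hd z).differentiableAt) (fun z => (hd z).fderiv)
    obtain ⟨z0, hz0⟩ : ∃ z0, z0 ∉ K ∪ tsupport σ := by
      by_contra hcon
      push Not at hcon
      have : IsCompact (univ : Set (ℝ × ℝ)) := by
        rw [← eq_univ_of_forall hcon]; exact hKc.union hσc
      exact noncompact_univ (ℝ × ℝ) this
    intro z
    have h1 := hconst z z0
    simp only [mem_union, not_or] at hz0
    simp only [hτ0 z0 hz0.1, image_eq_zero_of_notMem_tsupport hz0.2, sub_zero] at h1
    linarith
  -- Fubini
  have hjc : ContinuousOn (fun p : ℝ × (ℝ × ℝ) => φ p.1 p.2) (Icc 0 1 ×ˢ univ) :=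
    continuousOn_prod_of_continuousOn_lipschitzOnWith' _ _
      (fun t ht => (hφlip t ht).lipschitzOnWith) (fun z _ => (hφc z).continuousOn)
  have hjG : ContinuousOn (fun p : ℝ × (ℝ × ℝ) => G p.1 (φ p.1 p.2)) (Icc 0 1 ×ˢ K) :=
    hGs.continuous.comp_continuousOn
      (continuousOn_fst.prodMk (hjc.mono (prod_mono_right (subset_univ K))))
  have hint : Integrable (fun p : ℝ × (ℝ × ℝ) => G p.1 (φ p.1 p.2))
      ((volume.restrict (Ioc (0:ℝ) 1)).prod (volume.restrict K)) := by
    rw [Measure.prod_restrict]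
    exact (hjG.integrableOn_compact (isCompact_Icc.prod hKc)).mono_set
      (prod_mono_left Ioc_subset_Icc_self)
  calc ∫ z, σ z = ∫ z, τ z := by simp only [hστ]
    _ = ∫ z in K, τ z := (setIntegral_eq_integral_of_forall_compl_eq_zero hτ0).symm
    _ = ∫ z in K, ∫ t in Ioc (0:ℝ) 1, G t (φ t z) := by
        simp only [τ, intervalIntegral.integral_of_le zero_le_one]
    _ = ∫ t in Ioc (0:ℝ) 1, ∫ z in K, G t (φ t z) := (integral_integral_swap hint).symm
    _ = ∫ t in Ioc (0:ℝ) 1, 2 * ∫ z, H t z := by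
        refine setIntegral_congr_fun measurableSet_Ioc fun t ht => ?_
        have ht' := Ioc_subset_Icc_self ht
        rw [setIntegral_eq_integral_of_forall_compl_eq_zero
          (fun z hz => by rw [hφK t ht' z hz, hG0 z hz]),
          integral_comp_area (φ t) (A t) (fun z => hAf z t ht') (hdet t ht')
            (flow_injective V M hVlip φ hφ0 hflow t ht'.1) K hKc (hφK t ht') (G t)
            (fun z hz => hG0 z hz t)]
        have hHcs : HasCompactSupport (H t) := HasCompactSupport.intro hKc fun z hz => hH0 z hz t
        have hVcont : Continuous (V t) := hVs.continuous.comp (continuous_const.prodMk continuous_id)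
        have i1 : Integrable (fun z => l z (V t z)) :=
          (hls.continuous.clm_apply hVcont).integrable_of_hasCompactSupport
            (HasCompactSupport.intro hKc fun z hz => by simp [hV0 z hz t])
        have i2 : Integrable (H t) :=
          (hHt t).continuous.integrable_of_hasCompactSupport hHcs
        have e1 := integral_primitive l hl (H t) (hHt t) hHcs
        have e2 : ∫ z, l z (V t z) = ∫ z, H t z := e1
        simp only [G]
        rw [integral_add i1 i2, e2]; ring
    _ = 2 * ∫ t in (0:ℝ)..1, ∫ z, H t z := by
        rw [intervalIntegral.integral_of_le zero_le_one, integral_const_mul]
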